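/- Let n ≥ 2. If the comodule category A_F of the normal triangular matrix comonad F is hereditary, then for all i < j the functor F_{ij} sends every injective object of A_i to an injective object of A_j. -/

import Mathlib

/-!
STATEMENT 14: Let `n ≥ 2`. If the category of comodules over a normal triangular
matrix comonad `F` on `A₁ × ⋯ × Aₙ` is hereditary, then for all `i < j` the functor
`F_{ij}` sends every injective object of `A_i` to an injective object of `A_j`.
-/

open CategoryTheory Limits

universe v u

variable {n : ℕ} {A : Fin n → Type u} [∀ i, Category.{v} (A i)]
  [∀ i, Abelian (A i)] [∀ i, EnoughInjectives (A i)]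
variable (F : ∀ ⦃i j : Fin n⦄, i < j → (A i ⥤ A j))
variable (δ : ∀ ⦃i k j : Fin n⦄ (h₁ : i < k) (h₂ : k < j), F (h₁.trans h₂) ⟶ F h₁ ⋙ F h₂)

/-- A comodule over the normal triangular matrix comonad determined by the data
`(F, δ)`. -/
structure Comod where
  X : ∀ i, A i
  d : ∀ {i j : Fin n} (h : i < j), X j ⟶ (F h).obj (X i)
  compat : ∀ {i k j : Fin n} (h₁ : i < k) (h₂ : k < j),
    d h₂ ≫ (F h₂).map (d h₁) = d (h₁.trans h₂) ≫ (δ h₁ h₂).app (X i)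

/-- Morphisms of comodules. -/
@[ext]
structure ComodHom (M N : Comod F δ) where
  f : ∀ i, M.X i ⟶ N.X i
  comm : ∀ {i j : Fin n} (h : i < j), f j ≫ N.d h = M.d h ≫ (F h).map (f i)

instance : Category (Comod F δ) where
  Hom M N := ComodHom F δ M N
  id M := ⟨fun i => 𝟙 (M.X i), fun h => by simp⟩
  comp f g := ⟨fun i => f.f i ≫ g.f i, fun h => by
    rw [Category.assoc, g.comm, ← Category.assoc, f.comm, Category.assoc, Functor.map_comp]⟩
  id_comp f := by apply ComodHom.ext; funext i; exact Category.id_comp _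
  comp_id f := by apply ComodHom.ext; funext i; exact Category.comp_id _
  assoc f g h := by apply ComodHom.ext; funext i; exact Category.assoc _ _ _

/-- A category is hereditary if for every epimorphism `e : E ⟶ X` with `E` injective,
`X` is also injective. -/
def Hereditary (C : Type*) [Category C] : Prop :=
  ∀ ⦃E X : C⦄ (e : E ⟶ X), Epi e → Injective E → Injective X

/-- The forgetful functor from comodules to `A₁ × ⋯ × Aₙ`. -/
def forgetComod : Comod F δ ⥤ (∀ i, A i) where
  obj M := M.X
  map f := f.f

section helpers

open ZeroObject

theorem aux_ex {α : Type*} {P : Prop} (h : P) (f : P → α) : ∃ d, ∀ h', d = f h' :=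
  ⟨f h, fun _ => rfl⟩

theorem aux_comp_f {M N P : Comod F δ} (f : M ⟶ N) (g : N ⟶ P) (i : Fin n) :
    (f ≫ g).f i = f.f i ≫ g.f i := rfl

theorem aux_hom_ext {M N : Comod F δ} (f g : M ⟶ N) (h : ∀ i, f.f i = g.f i) : f = g :=
  ComodHom.ext (funext h)

theorem aux_isZero (hadd : ∀ ⦃i j : Fin n⦄ (h : i < j), (F h).Additive)
    {i j : Fin n} (h : i < j) {X : A i} (hX : IsZero X) : IsZero ((F h).obj X) := by
  have := hadd h
  exact (F h).map_isZero hX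

/-- Monomorphisms of comodules are monomorphisms in each component. -/
theorem aux_mono (hadd : ∀ ⦃i j : Fin n⦄ (h : i < j), (F h).Additive)
    (hlex : ∀ ⦃i j : Fin n⦄ (h : i < j), PreservesFiniteLimits (F h))
    {M N : Comod F δ} (f : M ⟶ N) [Mono f] (i : Fin n) : Mono (f.f i) := by
  have hm : ∀ {i j : Fin n} (h : i < j), Mono ((F h).map (kernel.ι (f.f i))) := by
    intro i j h
    have := hlex h
    infer_instance
  have key : ∀ {i j : Fin n} (h : i < j), ∃ d : kernel (f.f j) ⟶ (F h).obj (kernel (f.f i)),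
      d ≫ (F h).map (kernel.ι (f.f i)) = kernel.ι (f.f j) ≫ M.d h := by
    intro i j h
    have := hlex h
    have := hadd h
    have w : (kernel.ι (f.f j) ≫ M.d h) ≫ (F h).map (f.f i) = 0 := by
      rw [Category.assoc, ← f.comm, ← Category.assoc, kernel.condition, zero_comp]
    refine ⟨kernel.lift _ _ w ≫ (PreservesKernel.iso (F h) (f.f i)).inv, ?_⟩
    rw [Category.assoc]
    simp
  choose d hd using fun (i j : Fin n) (h : i < j) => key h
  let K : Comod F δ :=
    { X := fun i => kernel (f.f i)
      d := fun {i j} h => d i j h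
      compat := by
        intro i k j h₁ h₂
        have := hlex h₂
        have := hm h₁
        rw [← cancel_mono ((F h₂).map ((F h₁).map (kernel.ι (f.f i))))]
        have e := (δ h₁ h₂).naturality (kernel.ι (f.f i))
        simp only [Functor.comp_map] at e
        rw [Category.assoc, Category.assoc, ← Functor.map_comp, hd, ← e, Functor.map_comp,
          ← Category.assoc, hd, ← Category.assoc, hd, Category.assoc, Category.assoc, M.compat] }
  let ι : K ⟶ M := ⟨fun i => kernel.ι (f.f i), fun h => (hd _ _ h).symm⟩
  let z : K ⟶ M := ⟨fun i => 0, fun h => by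
    have := hadd h
    simp⟩
  have e : ι = z := by
    rw [← cancel_mono f]
    apply aux_hom_ext
    intro i
    rw [aux_comp_f, aux_comp_f]
    change kernel.ι (f.f i) ≫ f.f i = 0 ≫ f.f i
    simp
  have e2 : kernel.ι (f.f i) = 0 := congrArg (fun (t : ComodHom F δ K M) => t.f i) e
  exact Preadditive.mono_of_kernel_zero e2

theorem aux_mono_of {M N : Comod F δ} (f : M ⟶ N) (h : ∀ i, Mono (f.f i)) : Mono f := by
  constructor
  intro Z a b hab
  apply aux_hom_ext
  intro i
  have := h i
  rw [← cancel_mono (f.f i), ← aux_comp_f, ← aux_comp_f, hab]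

theorem aux_epi_of {M N : Comod F δ} (f : M ⟶ N) (h : ∀ i, Epi (f.f i)) : Epi f := by
  constructor
  intro Z a b hab
  apply aux_hom_ext
  intro i
  have := h i
  rw [← cancel_epi (f.f i), ← aux_comp_f, ← aux_comp_f, hab]

/-- The cofree comodule on an injective object is injective. -/
theorem aux_cofree
    (hδ : ∀ ⦃i k l j : Fin n⦄ (h₁ : i < k) (h₂ : k < l) (h₃ : l < j) (X : A i),
      (δ h₁ (h₂.trans h₃)).app X ≫ (δ h₂ h₃).app ((F h₁).obj X) =
        (δ (h₁.trans h₂) h₃).app X ≫ (F h₃).map ((δ h₁ h₂).app X))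
    (hadd : ∀ ⦃i j : Fin n⦄ (h : i < j), (F h).Additive)
    (hlex : ∀ ⦃i j : Fin n⦄ (h : i < j), PreservesFiniteLimits (F h))
    (i : Fin n) (E : A i) (hE : Injective E) :
    ∃ M : Comod F δ, Injective M ∧ ∀ (j : Fin n) (h : i < j),
      Nonempty (M.X j ≅ (F h).obj E) := by
  obtain ⟨C, ⟨e0⟩, he, hz⟩ : ∃ C : ∀ k, A k, Nonempty (C i ≅ E) ∧
      (∀ k (h : i < k), Nonempty (C k ≅ (F h).obj E)) ∧ ∀ k, k < i → IsZero (C k) := by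
    refine ⟨fun k => if h : i < k then (F h).obj E else
      if h : i = k then h ▸ E else 0, ⟨eqToIso ?_⟩, fun k h => ⟨eqToIso ?_⟩, fun k h => ?_⟩
    · simp
    · simp [h]
    · have h1 : ¬ i < k := by omega
      have h2 : ¬ i = k := by omega
      simp only [h1, h2, dite_false]
      exact isZero_zero _
  have e : ∀ k (h : i < k), C k ≅ (F h).obj E := fun k h => (he k h).some
  have key : ∀ {k l : Fin n} (h : k < l), ∃ d : C l ⟶ (F h).obj (C k),
      (∀ h' : i < k, d = (e l (h'.trans h)).hom ≫ (δ h' h).app E ≫ (F h).map (e k h').inv) ∧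
      (∀ h' : i = k, d = (e l (h' ▸ h)).hom ≫
        eqToHom (by subst h'; rfl) ≫ (F (h' ▸ h : i < l)).map e0.inv ≫
        eqToHom (by subst h'; rfl)) := by
    intro k l h
    rcases lt_trichotomy i k with h' | h' | h'
    · obtain ⟨x, hx⟩ := aux_ex h' (fun h' =>
        (e l (h'.trans h)).hom ≫ (δ h' h).app E ≫ (F h).map (e k h').inv)
      exact ⟨x, hx, fun h'' => absurd h'' h'.ne⟩
    · subst h'
      exact ⟨(e l h).hom ≫ (F h).map e0.inv, fun h'' => absurd h'' (lt_irrefl _), fun _ => by simp⟩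
    · exact ⟨0, fun h'' => absurd h'' h'.not_gt, fun h'' => absurd h''.symm h'.ne⟩
  choose d hd1 hd2 using fun (k l : Fin n) (h : k < l) => key h
  have hd2' : ∀ l (h : i < l), d i l h = (e l h).hom ≫ (F h).map e0.inv := by
    intro l h
    rw [hd2 i l h rfl]
    simp
  let M : Comod F δ :=
    { X := C
      d := fun {k l} h => d k l h
      compat := by
        intro k l m h₁ h₂
        rcases lt_trichotomy i k with h' | h' | h'
        · rw [hd1 _ _ h₁ h', hd1 _ _ h₂ (h'.trans h₁), hd1 _ _ (h₁.trans h₂) h']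
          have nat := (δ h₁ h₂).naturality (e k h').inv
          simp only [Functor.comp_map] at nat
          simp only [Category.assoc, nat, Functor.map_comp]
          rw [← Functor.map_comp_assoc, Iso.inv_hom_id, CategoryTheory.Functor.map_id, Category.id_comp,
            reassoc_of% (hδ h' h₁ h₂ E)]
        · subst h'
          rw [hd2', hd2', hd1 _ _ h₂ h₁]
          have nat := (δ h₁ h₂).naturality e0.inv
          simp only [Functor.comp_map] at nat
          simp only [Category.assoc, nat, Functor.map_comp]
          rw [← Functor.map_comp_assoc, Iso.inv_hom_id, CategoryTheory.Functor.map_id, Category.id_comp]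
        · exact (aux_isZero F hadd h₂ (aux_isZero F hadd h₁ (hz k h'))).eq_of_tgt _ _ }
  refine ⟨M, ⟨?_⟩, he⟩
  intro P Q g m hm
  have hmi := aux_mono F δ hadd hlex m i
  let φ : Q.X i ⟶ E := Injective.factorThru (g.f i ≫ e0.hom) (m.f i)
  have hφ : m.f i ≫ φ = g.f i ≫ e0.hom := Injective.comp_factorThru _ _
  have keyr : ∀ k, ∃ r : Q.X k ⟶ C k,
      (∀ h : i < k, r = Q.d h ≫ (F h).map φ ≫ (e k h).inv) ∧
      (∀ h : i = k, HEq r (φ ≫ e0.inv)) := by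
    intro k
    rcases lt_trichotomy i k with h' | h' | h'
    · obtain ⟨x, hx⟩ := aux_ex h' (fun h => Q.d h ≫ (F h).map φ ≫ (e k h).inv)
      exact ⟨x, hx, fun h'' => absurd h'' h'.ne⟩
    · subst h'
      exact ⟨φ ≫ e0.inv, fun h'' => absurd h'' (lt_irrefl _), fun _ => HEq.rfl⟩
    · exact ⟨0, fun h'' => absurd h'' h'.not_gt, fun h'' => absurd h''.symm h'.ne⟩
  choose r hr1 hr2 using keyr
  have hr2' : r i = φ ≫ e0.inv := by
    exact eq_of_heq (hr2 i rfl)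
  let R : Q ⟶ M := ⟨r, by
    intro k l h
    change r l ≫ d k l h = _
    rcases lt_trichotomy i k with h' | h' | h'
    · rw [hd1 _ _ h h', hr1 _ h', hr1 _ (h'.trans h)]
      have nat := (δ h' h).naturality φ
      simp only [Functor.comp_map] at nat
      simp only [Category.assoc, Iso.inv_hom_id_assoc, Functor.map_comp]
      rw [reassoc_of% nat, ← Category.assoc (Q.d _), ← Q.compat h' h, Category.assoc]
    · subst h'
      rw [hd2', hr2', hr1 _ h]
      simp
    · exact (aux_isZero F hadd h (hz k h')).eq_of_tgt _ _⟩
  refine ⟨R, aux_hom_ext F δ _ _ fun k => ?_⟩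
  rw [aux_comp_f]
  change m.f k ≫ r k = g.f k
  rcases lt_trichotomy i k with h' | h' | h'
  · rw [hr1 k h', ← Category.assoc, m.comm h', Category.assoc, ← Functor.map_comp_assoc, hφ,
      Functor.map_comp, Category.assoc, ← Category.assoc, ← g.comm h']
    change (g.f k ≫ d i k h') ≫ _ = _
    rw [hd2']
    simp only [Category.assoc]
    rw [← Functor.map_comp_assoc, Iso.inv_hom_id, CategoryTheory.Functor.map_id, Category.id_comp,
      Iso.hom_inv_id, Category.comp_id]
  · subst h'
    rw [hr2', reassoc_of% hφ, Iso.hom_inv_id, Category.comp_id]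
  · exact (hz k h').eq_of_tgt _ _

/-- Every comodule has a truncation as a quotient. -/
theorem aux_trunc
    (hadd : ∀ ⦃i j : Fin n⦄ (h : i < j), (F h).Additive) (M : Comod F δ) (j : Fin n) :
    ∃ (X : Comod F δ) (p : M ⟶ X), Epi p ∧ (∀ k, k < j → IsZero (X.X k)) ∧
      Nonempty (X.X j ≅ M.X j) := by
  obtain ⟨C, he, hz⟩ : ∃ C : ∀ k, A k,
      (∀ k, j ≤ k → Nonempty (C k ≅ M.X k)) ∧ ∀ k, k < j → IsZero (C k) := by
    refine ⟨fun k => if j ≤ k then M.X k else 0, fun k h => ⟨eqToIso ?_⟩, fun k h => ?_⟩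
    · simp [h]
    · simp only [h.not_ge, if_false]
      exact isZero_zero _
  have e : ∀ k, j ≤ k → (C k ≅ M.X k) := fun k h => (he k h).some
  have key : ∀ {k l : Fin n} (h : k < l), ∃ d : C l ⟶ (F h).obj (C k),
      (∀ h' : j ≤ k, d = (e l (h'.trans h.le)).hom ≫ M.d h ≫ (F h).map (e k h').inv) := by
    intro k l h
    by_cases h' : j ≤ k
    · exact aux_ex h' _
    · exact ⟨0, fun h'' => absurd h'' h'⟩
  choose d hd using fun (k l : Fin n) (h : k < l) => key h
  let X : Comod F δ :=
    { X := C
      d := fun {k l} h => d k l h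
      compat := by
        intro k l m h₁ h₂
        by_cases h' : j ≤ k
        · rw [hd _ _ h₁ h', hd _ _ h₂ (h'.trans h₁.le), hd _ _ (h₁.trans h₂) h']
          have nat := (δ h₁ h₂).naturality (e k h').inv
          simp only [Functor.comp_map] at nat
          simp only [Category.assoc, nat, Functor.map_comp]
          rw [← Functor.map_comp_assoc, Iso.inv_hom_id, CategoryTheory.Functor.map_id, Category.id_comp,
            reassoc_of% (M.compat h₁ h₂)]
        · exact (aux_isZero F hadd h₂ (aux_isZero F hadd h₁
            (hz k (not_le.mp h')))).eq_of_tgt _ _ }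
  have keyp : ∀ k, ∃ p : M.X k ⟶ C k, ∀ h : j ≤ k, p = (e k h).inv := by
    intro k
    by_cases h' : j ≤ k
    · exact aux_ex h' _
    · exact ⟨0, fun h'' => absurd h'' h'⟩
  choose p hp using keyp
  let P : M ⟶ X := ⟨p, by
    intro k l h
    change p l ≫ d k l h = _
    by_cases h' : j ≤ k
    · rw [hd _ _ h h', hp _ h', hp _ (h'.trans h.le)]
      simp
    · exact (aux_isZero F hadd h (hz k (not_le.mp h'))).eq_of_tgt _ _⟩
  refine ⟨X, P, aux_epi_of F δ P fun k => ?_, hz, he j le_rfl⟩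
  change Epi (p k)
  by_cases h' : j ≤ k
  · rw [hp k h']
    infer_instance
  · exact ⟨fun _ _ _ => (hz k (not_le.mp h')).eq_of_src _ _⟩

/-- The lowest component of an injective comodule is injective. -/
theorem aux_lowest
    (hadd : ∀ ⦃i j : Fin n⦄ (h : i < j), (F h).Additive) (X : Comod F δ) (hX : Injective X)
    (j : Fin n) (hz : ∀ k, k < j → IsZero (X.X k)) : Injective (X.X j) := by
  have single : ∀ S : A j, ∃ M : Comod F δ, Nonempty (M.X j ≅ S) ∧
      ∀ k, j ≠ k → IsZero (M.X k) := by
    intro S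
    refine ⟨⟨fun k => if h : j = k then h ▸ S else 0, fun h => 0, fun h₁ h₂ => ?_⟩,
      ⟨eqToIso ?_⟩, fun k h => ?_⟩
    · simp
    · simp
    · simp only [h, dite_false]
      exact isZero_zero _
  have hom : ∀ (M N : Comod F δ) (_ : ∀ k, j ≠ k → IsZero (M.X k))
      (_ : ∀ k, k < j → IsZero (N.X k)) (φ : M.X j ⟶ N.X j), ∃ f : M ⟶ N, f.f j = φ := by
    intro M N hM hN φ
    have keyp : ∀ k, ∃ p : M.X k ⟶ N.X k,
        ∀ h : j = k, HEq p φ := by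
      intro k
      by_cases h' : j = k
      · subst h'
        exact ⟨φ, fun _ => HEq.rfl⟩
      · exact ⟨0, fun h'' => absurd h'' h'⟩
    choose p hp using keyp
    refine ⟨⟨p, ?_⟩, ?_⟩
    · intro k l h
      by_cases h' : j = l
      · exact (aux_isZero F hadd h (hN k (h' ▸ h))).eq_of_tgt _ _
      · exact (hM l h').eq_of_src _ _
    · change p j = φ
      exact eq_of_heq (hp j rfl)
  constructor
  intro S T g m hm
  obtain ⟨MS, ⟨eS⟩, zS⟩ := single S
  obtain ⟨MT, ⟨eT⟩, zT⟩ := single T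
  obtain ⟨g', hg'⟩ := hom MS X zS hz (eS.hom ≫ g)
  obtain ⟨m', hm'⟩ := hom MS MT zS (fun k h => zT k h.ne') (eS.hom ≫ m ≫ eT.inv)
  have : Mono m' := aux_mono_of F δ m' fun k => by
    by_cases h : j = k
    · subst h
      rw [hm']
      infer_instance
    · exact ⟨fun _ _ _ => (zS k h).eq_of_tgt _ _⟩
  have hc : m' ≫ Injective.factorThru g' m' = g' := Injective.comp_factorThru _ _
  have hc' := congrArg (fun (t : ComodHom F δ MS X) => t.f j) hc
  change m'.f j ≫ (Injective.factorThru g' m').f j = g'.f j at hc'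
  rw [hg', hm'] at hc'
  refine ⟨eT.inv ≫ (Injective.factorThru g' m').f j, ?_⟩
  rw [← cancel_epi eS.hom, ← hc']
  simp

end helpers

theorem stmt_14 (hn : 2 ≤ n)
    (hδ : ∀ ⦃i k l j : Fin n⦄ (h₁ : i < k) (h₂ : k < l) (h₃ : l < j) (X : A i),
      (δ h₁ (h₂.trans h₃)).app X ≫ (δ h₂ h₃).app ((F h₁).obj X) =
        (δ (h₁.trans h₂) h₃).app X ≫ (F h₃).map ((δ h₁ h₂).app X))
    (hadd : ∀ ⦃i j : Fin n⦄ (h : i < j), (F h).Additive)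
    (hlex : ∀ ⦃i j : Fin n⦄ (h : i < j), PreservesFiniteLimits (F h))
    (hH : Hereditary (Comod F δ))
    ⦃i j : Fin n⦄ (hij : i < j) (E : A i) (hE : Injective E) :
    Injective ((F hij).obj E) := by
  obtain ⟨M, hM, hMe⟩ := aux_cofree F δ hδ hadd hlex i E hE
  obtain ⟨X, p, hp, hz, ⟨eX⟩⟩ := aux_trunc F δ hadd M j
  have hX : Injective X := hH p hp hM
  have hXj := aux_lowest F δ hadd X hX j hz
  exact Injective.of_iso (eX ≪≫ (hMe j hij).some) hXj
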